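/- For every type (x : ⋆) ⊢ A derivable in CaTT in the context with a single object variable, the definitional equality ⟦A⟧_B ≡ Id^{dim A + 1}_B(x) holds in HoTT (Lemma 5.2, type part). -/

import Mathlib

/-! ### Deep embedding of the fragment of Martin-Löf type theory ("HoTT") -/

/-- HoTT variable names: `Sum.inl n` is the image of CaTT/GSeTT variable `n`,
`Sum.inr k` are extra HoTT-only names. -/
abbrev HVar : Type := ℕ ⊕ ℕ

/-- The fixed variable `B`, not the name of any CaTT/GSeTT variable. -/
def Bv : HVar := Sum.inr 0

mutual
/-- Pre-terms of HoTT. `J A u x y e P p` is the Paulin-Mohring eliminator with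
base point `u : A`, motive `P` (with bound variables `x y e`) and base case `p`. -/
inductive HTm : Type
  | var : HVar → HTm
  | refl : HTy → HTm → HTm
  | J : HTy → HTm → HVar → HVar → HVar → HTy → HTm → HTm
  | app : HTm → HTm → HTm
  | lam : HVar → HTy → HTm → HTm

/-- Pre-types of HoTT: the Tarski universe `univ`, `el`, identity types and Π-types. -/
inductive HTy : Type
  | univ : HTy
  | el : HTm → HTy
  | id : HTy → HTm → HTm → HTy
  | pi : HVar → HTy → HTy → HTy
end

/-- Pre-substitutions of HoTT (head = most recent binding). -/
abbrev HSubst := List (HVar × HTm)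
/-- Pre-contexts of HoTT (head = most recent declaration). -/
abbrev HCtx := List (HVar × HTy)

def hlookup : HSubst → HVar → HTm
  | [], x => .var x
  | (y, t) :: γ, x => if y = x then t else hlookup γ x

/-- Remove the bindings of a bound variable from a substitution. -/
def hdrop (γ : HSubst) (x : HVar) : HSubst := γ.filter (fun q => q.1 ≠ x)

mutual
/-- Action of substitutions on HoTT pre-terms. -/
def hsubTm : HTm → HSubst → HTm
  | .var x, γ => hlookup γ x
  | .refl A u, γ => .refl (hsubTy A γ) (hsubTm u γ)
  | .J A u x y e P p, γ =>
      .J (hsubTy A γ) (hsubTm u γ) x y e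
        (hsubTy P (hdrop (hdrop (hdrop γ x) y) e)) (hsubTm p γ)
  | .app f u, γ => .app (hsubTm f γ) (hsubTm u γ)
  | .lam x A u, γ => .lam x (hsubTy A γ) (hsubTm u (hdrop γ x))
/-- Action of substitutions on HoTT pre-types. -/
def hsubTy : HTy → HSubst → HTy
  | .univ, _ => .univ
  | .el a, γ => .el (hsubTm a γ)
  | .id A u v, γ => .id (hsubTy A γ) (hsubTm u γ) (hsubTm v γ)
  | .pi x A B, γ => .pi x (hsubTy A γ) (hsubTy B (hdrop γ x))
end

/-- Composition of HoTT substitutions. -/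
def hcomp (δ γ : HSubst) : HSubst := δ.map (fun p => (p.1, hsubTm p.2 γ))

/-- The identity substitution of a context. -/
def hid (Γ : HCtx) : HSubst := Γ.map (fun p => (p.1, HTm.var p.1))

def hassoc : HCtx → HVar → Option HTy
  | [], _ => none
  | (y, A) :: Γ, x => if y = x then some A else hassoc Γ x

mutual
/-- Definitional equality of HoTT pre-terms, generated by the computation rule
`J(A,u,P,p) v refl ≡ p` together with congruence rules. -/
inductive HTmEq : HTm → HTm → Prop
  | jbeta (A : HTy) (u : HTm) (x y e : HVar) (P : HTy) (p v : HTm) (B : HTy) (w : HTm) :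
      HTmEq (.app (.app (.J A u x y e P p) v) (.refl B w)) p
  | refl (u : HTm) : HTmEq u u
  | symm : HTmEq u v → HTmEq v u
  | trans : HTmEq u v → HTmEq v w → HTmEq u w
  | reflCong : HTyEq A A' → HTmEq u u' → HTmEq (.refl A u) (.refl A' u')
  | JCong : HTyEq A A' → HTmEq u u' → HTyEq P P' → HTmEq p p' →
      HTmEq (.J A u x y e P p) (.J A' u' x y e P' p')
  | appCong : HTmEq f f' → HTmEq u u' → HTmEq (.app f u) (.app f' u')
  | lamCong : HTyEq A A' → HTmEq u u' → HTmEq (.lam x A u) (.lam x A' u')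

/-- Definitional equality of HoTT pre-types. -/
inductive HTyEq : HTy → HTy → Prop
  | refl (A : HTy) : HTyEq A A
  | symm : HTyEq A B → HTyEq B A
  | trans : HTyEq A B → HTyEq B C → HTyEq A C
  | elCong : HTmEq a a' → HTyEq (.el a) (.el a')
  | idCong : HTyEq A A' → HTmEq u u' → HTmEq v v' → HTyEq (.id A u v) (.id A' u' v')
  | piCong : HTyEq A A' → HTyEq B B' → HTyEq (.pi x A B) (.pi x A' B')
end

mutual
/-- Validity of HoTT contexts: `⊢ Γ`. -/
inductive HCtxJ : HCtx → Prop
  | nil : HCtxJ []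
  | cons : HCtxJ Γ → HTyJ Γ A → HCtxJ ((x, A) :: Γ)

/-- Validity of HoTT types: `Γ ⊢ A`. -/
inductive HTyJ : HCtx → HTy → Prop
  | univ : HCtxJ Γ → HTyJ Γ .univ
  | el : HTmJ Γ a .univ → HTyJ Γ (.el a)
  | id : HTmJ Γ u A → HTmJ Γ v A → HTyJ Γ (.id A u v)
  | pi : HTyJ Γ A → HTyJ ((x, A) :: Γ) B → HTyJ Γ (.pi x A B)
  | conv : HTyJ Γ A → HTyEq A B → HTyJ Γ B

/-- Typing of HoTT terms: `Γ ⊢ u : A`. -/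
inductive HTmJ : HCtx → HTm → HTy → Prop
  | var : HCtxJ Γ → hassoc Γ x = some A → HTmJ Γ (.var x) A
  | refl : HTmJ Γ u A → HTmJ Γ (.refl A u) (.id A u u)
  | lam : HTyJ Γ A → HTmJ ((x, A) :: Γ) u B → HTmJ Γ (.lam x A u) (.pi x A B)
  | app : HTmJ Γ f (.pi x A B) → HTmJ Γ u A → HTmJ Γ (.app f u) (hsubTy B [(x, u)])
  | J : HTyJ Γ A → HTmJ Γ u A →
      HTyJ ((e, .id A (.var x) (.var y)) :: (y, A) :: (x, A) :: Γ) P →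
      HTmJ Γ p (hsubTy P [(x, u), (y, u), (e, .refl A u)]) →
      HTmJ Γ (.J A u x y e P p)
        (.pi y A (.pi e (.id A u (.var y)) (hsubTy P [(x, u)])))
  | conv : HTmJ Γ u A → HTyEq A B → HTmJ Γ u B
  | convTm : HTmJ Γ u A → HTmEq u v → HTmJ Γ v A

/-- Typing of HoTT substitutions: `Δ ⊢ γ : Γ`. -/
inductive HSubJ : HCtx → HSubst → HCtx → Prop
  | nil : HCtxJ Δ → HSubJ Δ [] []
  | cons : HSubJ Δ γ Γ → HTyJ Γ A → HTmJ Δ t (hsubTy A γ) →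
      HSubJ Δ ((x, t) :: γ) ((x, A) :: Γ)
end

mutual
/-- Iterated identity types `Idⁿ_A(u)`. -/
def idN : ℕ → HTy → HTm → HTy
  | 0, A, _ => A
  | n+1, A, u => .id (idN n A u) (reflN n A u) (reflN n A u)
/-- Iterated reflexivities `reflⁿ_{A,u}`. -/
def reflN : ℕ → HTy → HTm → HTm
  | 0, _, u => u
  | n+1, A, u => .refl (idN n A u) (reflN n A u)
end

/-- Π-lifting `Π_Γ.A`: successively bind all variables of `Γ`. -/
def piLift : HCtx → HTy → HTy
  | [], A => A
  | (x, T) :: Γ, A => piLift Γ (.pi x T A)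

/-- λ-lifting `λ_Γ.u`: successively bind all variables of `Γ`. -/
def lamLift : HCtx → HTm → HTm
  | [], u => u
  | (x, T) :: Γ, u => lamLift Γ (.lam x T u)

/-! ### The dependent type theory CaTT -/

mutual
/-- Pre-terms of CaTT: variables and coherences `coh_{Γ,A}[γ]`. -/
inductive CTm : Type
  | var : ℕ → CTm
  | coh : CCtx → CTy → CSub → CTm
/-- Pre-types of CaTT: `⋆` and `u →_A v`. -/
inductive CTy : Type
  | obj : CTy
  | arr : CTy → CTm → CTm → CTy
/-- Pre-substitutions of CaTT. -/
inductive CSub : Type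
  | nil : CSub
  | cons : CSub → ℕ → CTm → CSub
/-- Pre-contexts of CaTT. -/
inductive CCtx : Type
  | nil : CCtx
  | cons : CCtx → ℕ → CTy → CCtx
end

def clookup : CSub → ℕ → CTm
  | .nil, x => .var x
  | .cons γ y t, x => if y = x then t else clookup γ x

mutual
/-- Action of CaTT substitutions on pre-terms; `coh_{Γ,A}[γ][δ] = coh_{Γ,A}[γ∘δ]`. -/
def csubTm : CTm → CSub → CTm
  | .var x, γ => clookup γ x
  | .coh Γ A δ, γ => .coh Γ A (ccomp δ γ)
/-- Action of CaTT substitutions on pre-types. -/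
def csubTy : CTy → CSub → CTy
  | .obj, _ => .obj
  | .arr A u v, γ => .arr (csubTy A γ) (csubTm u γ) (csubTm v γ)
/-- Composition of CaTT substitutions. -/
def ccomp : CSub → CSub → CSub
  | .nil, _ => .nil
  | .cons δ x t, γ => .cons (ccomp δ γ) x (csubTm t γ)
end

def cassoc : CCtx → ℕ → Option CTy
  | .nil, _ => none
  | .cons Γ y A, x => if y = x then some A else cassoc Γ x

/-- The set of variables declared in a CaTT context. -/
def cvarsCtx : CCtx → Finset ℕ
  | .nil => ∅
  | .cons Γ x _ => insert x (cvarsCtx Γ)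

mutual
/-- Variables used by a CaTT pre-term. -/
def varTm : CTm → Finset ℕ
  | .var x => {x}
  | .coh _ _ γ => varSub γ
/-- Variables used by a CaTT pre-type. -/
def varTy : CTy → Finset ℕ
  | .obj => ∅
  | .arr A u v => varTy A ∪ varTm u ∪ varTm v
/-- Variables used by a CaTT pre-substitution. -/
def varSub : CSub → Finset ℕ
  | .nil => ∅
  | .cons γ _ t => varSub γ ∪ varTm t
end

/-- Dimension of a CaTT type: `dim ⋆ = -1`, `dim (u →_A v) = dim A + 1`. -/
def cdim : CTy → ℤ
  | .obj => -1
  | .arr A _ _ => cdim A + 1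

/-- `dim A + 1`, as a natural number. -/
def cdimN : CTy → ℕ
  | .obj => 0
  | .arr A _ _ => cdimN A + 1

/-- Dimension of a CaTT context. -/
def cdimCtx : CCtx → ℤ
  | .nil => -1
  | .cons Γ _ A => max (cdimCtx Γ) (cdim A)

/-- The auxiliary ps-context judgement `Γ ⊢_ps x : A` for CaTT contexts. -/
inductive CPsAux : CCtx → ℕ → CTy → Prop
  | pss (x : ℕ) : CPsAux (.cons .nil x .obj) x .obj
  | pse : CPsAux Γ x A → y ∉ cvarsCtx Γ → f ∉ cvarsCtx Γ → f ≠ y →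
      CPsAux (.cons (.cons Γ y A) f (.arr A (.var x) (.var y))) f (.arr A (.var x) (.var y))
  | psd : CPsAux Γ f (.arr A (.var x) (.var y)) → CPsAux Γ y A

/-- The ps-context judgement `Γ ⊢_ps` for CaTT contexts. -/
inductive CPs : CCtx → Prop
  | ps : CPsAux Γ x .obj → CPs Γ

def ctail : CCtx → CCtx
  | .nil => .nil
  | .cons Γ _ _ => Γ

/-- The `i`-source `∂ᵢ⁻Γ` of a ps-context. -/
def csrc (i : ℤ) : CCtx → CCtx
  | .cons (.cons Δ y A) f F =>
      if cdim A + 1 ≥ i then csrc i Δ else .cons (.cons (csrc i Δ) y A) f F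
  | Γ => Γ

/-- The `i`-target `∂ᵢ⁺Γ` of a ps-context. -/
def ctgt (i : ℤ) : CCtx → CCtx
  | .cons (.cons Δ y A) f F =>
      if cdim A + 1 > i then ctgt i Δ
      else if cdim A + 1 = i then .cons (ctail (ctgt i Δ)) y A
      else .cons (.cons (ctgt i Δ) y A) f F
  | Γ => Γ

mutual
/-- `⊢ Γ` in CaTT. -/
inductive CCtxJ : CCtx → Prop
  | nil : CCtxJ .nil
  | cons : CCtxJ Γ → CTyJ Γ A → CCtxJ (.cons Γ x A)
/-- `Γ ⊢ A` in CaTT. -/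
inductive CTyJ : CCtx → CTy → Prop
  | obj : CCtxJ Γ → CTyJ Γ .obj
  | arr : CTmJ Γ u A → CTmJ Γ v A → CTyJ Γ (.arr A u v)
/-- `Γ ⊢ t : A` in CaTT. -/
inductive CTmJ : CCtx → CTm → CTy → Prop
  | var : CCtxJ Γ → cassoc Γ x = some A → CTmJ Γ (.var x) A
  | coh : CohJ Γ A → CSubJ Δ γ Γ → CTmJ Δ (.coh Γ A γ) (csubTy A γ)
/-- `Δ ⊢ γ : Γ` in CaTT. -/
inductive CSubJ : CCtx → CSub → CCtx → Prop
  | nil : CCtxJ Δ → CSubJ Δ .nil .nil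
  | cons : CSubJ Δ γ Γ → CTyJ Γ A → CTmJ Δ t (csubTy A γ) →
      CSubJ Δ (.cons γ x t) (.cons Γ x A)
/-- The coherence judgement `Γ ⊢ coh A` of CaTT. -/
inductive CohJ : CCtx → CTy → Prop
  | mk (i : ℤ) : CPs Γ → (i = cdimCtx Γ - 1 ∨ i = cdimCtx Γ) →
      CTmJ (csrc i Γ) u A → CTmJ (ctgt i Γ) v A →
      varTm u ∪ varTy A = cvarsCtx (csrc i Γ) →
      varTm v ∪ varTy A = cvarsCtx (ctgt i Γ) →
      CohJ Γ (.arr A u v)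
end

/-- Predicate: a CaTT pre-term contains no `coh` constructor. -/
def nocohTm : CTm → Prop
  | .var _ => True
  | .coh _ _ _ => False

/-- Predicate: a CaTT pre-type contains no `coh` constructor. -/
def nocohTy : CTy → Prop
  | .obj => True
  | .arr A u v => nocohTy A ∧ nocohTm u ∧ nocohTm v

/-- Predicate: a CaTT pre-context contains no `coh` constructor. -/
def nocohCtx : CCtx → Prop
  | .nil => True
  | .cons Γ _ A => nocohCtx Γ ∧ nocohTy A

/-! ### Translation of CaTT into HoTT -/

mutual
def szTm : CTm → ℕ
  | .var _ => 1
  | .coh Γ A γ => szCtx Γ + szTy A + szSub γ + 1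
def szTy : CTy → ℕ
  | .obj => 1
  | .arr A u v => szTy A + szTm u + szTm v + 1
def szSub : CSub → ℕ
  | .nil => 1
  | .cons γ _ t => szSub γ + szTm t + 1
def szCtx : CCtx → ℕ
  | .nil => 1
  | .cons Γ _ A => szCtx Γ + szTy A + 1
end

lemma szSub_pos (γ : CSub) : 0 < szSub γ := by cases γ <;> simp [szSub]
lemma szCtx_pos (Γ : CCtx) : 0 < szCtx Γ := by cases Γ <;> simp [szCtx]
lemma szTy_pos (A : CTy) : 0 < szTy A := by cases A <;> simp [szTy]

/-- The fresh HoTT variables `x'`, `y'`, `f'` used in the motives of `J`. -/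
def xV : HVar := Sum.inr 1
def yV : HVar := Sum.inr 2
def fV : HVar := Sum.inr 3

mutual
/-- Translation `⟦-⟧_B` of CaTT pre-terms into HoTT pre-terms. -/
def interpTm : CTm → HTm
  | .var x => .var (Sum.inl x)
  | .coh Γ A γ => hsubTm (elim Γ A Γ (hid (interpCtx Γ))) (interpSub γ)
termination_by t => szTm t
decreasing_by
  all_goals simp [szTm, szTy, szSub, szCtx]
  all_goals (have _h1 := szSub_pos γ; omega)
/-- Translation `⟦-⟧_B` of CaTT pre-types into HoTT pre-types. -/
def interpTy : CTy → HTy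
  | .obj => .el (.var Bv)
  | .arr A u v => .id (interpTy A) (interpTm u) (interpTm v)
termination_by A => szTy A
decreasing_by
  all_goals simp [szTm, szTy, szSub, szCtx]
  all_goals omega
/-- Translation `⟦-⟧_B` of CaTT pre-substitutions (`⟦⟨⟩⟧_B = ⟨B ↦ B⟩`). -/
def interpSub : CSub → HSubst
  | .nil => [(Bv, .var Bv)]
  | .cons γ x t => (Sum.inl x, interpTm t) :: interpSub γ
termination_by γ => szSub γ
decreasing_by
  all_goals simp [szTm, szTy, szSub, szCtx]
  all_goals omega
/-- Translation `⟦-⟧_B` of CaTT pre-contexts (`⟦∅⟧_B = (B : Type)`). -/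
def interpCtx : CCtx → HCtx
  | .nil => [(Bv, .univ)]
  | .cons Γ x A => (Sum.inl x, interpTy A) :: interpCtx Γ
termination_by Γ => szCtx Γ
decreasing_by
  all_goals simp [szTm, szTy, szSub, szCtx]
  all_goals omega
/-- The auxiliary operation `elim_B(Δ, A, Γ, γ)`, defined by induction on the
ps-context `Δ`, which interprets coherences via iterated applications of `J`. -/
def elim : CCtx → CTy → CCtx → HSubst → HTm
  | .cons .nil x .obj, A, _, _ =>
      reflN (cdimN A) (.el (.var Bv)) (.var (Sum.inl x))
  | .cons (.cons Δ y C) f (.arr C' (.var x) v'), A, Γ, γ =>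
      let iC := interpTy C
      let iΔ' := interpCtx (.cons (.cons Δ y C) f (.arr C' (.var x) v'))
      let P := hsubTy (hsubTy (interpTy A) γ)
          ((Sum.inl x, .var xV) :: (Sum.inl y, .var yV) :: (Sum.inl f, .var fV) :: hid iΔ')
      let p := elim Δ A Γ (hcomp γ
          ((Sum.inl y, .var (Sum.inl x)) ::
           (Sum.inl f, .refl iC (.var (Sum.inl x))) :: hid (interpCtx Δ)))
      .app (.app (.J iC (.var (Sum.inl x)) xV yV fV P p) (.var (Sum.inl y))) (.var (Sum.inl f))
  | _, _, _, _ => .var Bv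
termination_by Δ A _ _ => szTy A + szCtx Δ
decreasing_by
  all_goals simp [szTm, szTy, szSub, szCtx]
  all_goals first
    | omega
    | (have _h2 := szCtx_pos Δ; omega)
    | (have _h3 := szTy_pos A; omega)
end

/-- The translation `⟦coh_{Γ,A}⟧_B = elim_B(Γ, A, Γ, id_{⟦Γ⟧_B})` of a coherence. -/
def interpCoh (Γ : CCtx) (A : CTy) : HTm := elim Γ A Γ (hid (interpCtx Γ))

mutual
/-- Free variables of an HoTT pre-term. -/
def hfvTm : HTm → Finset HVar
  | .var x => {x}
  | .refl A u => hfvTy A ∪ hfvTm u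
  | .J A u x y e P p => hfvTy A ∪ hfvTm u ∪ (hfvTy P \ {x, y, e}) ∪ hfvTm p
  | .app f u => hfvTm f ∪ hfvTm u
  | .lam x A u => hfvTy A ∪ (hfvTm u \ {x})
/-- Free variables of an HoTT pre-type. -/
def hfvTy : HTy → Finset HVar
  | .univ => ∅
  | .el a => hfvTm a
  | .id A u v => hfvTy A ∪ hfvTm u ∪ hfvTm v
  | .pi x A B => hfvTy A ∪ (hfvTy B \ {x})
end

/-- The variables bound by an HoTT context. -/
def hctxVars (Γ : HCtx) : Finset HVar := (Γ.map Prod.fst).toFinset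

/- A coherence `coh_{Γ,A}[γ]` is interpreted by iterated `J` applied to the values under `γ` of the
variables of the ps-context `Γ`. If `γ` lands in `(x : ⋆)`, then inductively all these values are
iterated reflexivities of `x`, so each `J` computes and what remains is the base case
`refl^{dim A + 1}` at `x`. Hence every term over `(x : ⋆)` is interpreted by an iterated
reflexivity. A type over `(x : ⋆)` is built from `⋆` by arrows, and by presupposition (if `u : A`
then `A` is a type, which rests on the substitution lemma of CaTT) every layer of it is again a
type over `(x : ⋆)`, whence the claim. -/

section CaTTContexts

variable {Γ : CCtx} {A : CTy} {y z : ℕ}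

/-- The declarations `x : A` of a CaTT context as a list, most recent first. Unlike `cassoc`, it
retains shadowed declarations, so that it is monotone in the context. -/
def CCtx.decls : CCtx → List (ℕ × CTy)
  | .nil => []
  | .cons Γ x A => (x, A) :: Γ.decls

/-- A context is well scoped if its variables are pairwise distinct and each type mentions only
variables declared before it. The judgement `⊢ Γ` does not enforce the former. -/
def CCtx.WellScoped : CCtx → Prop
  | .nil => True
  | .cons Γ x A => Γ.WellScoped ∧ x ∉ cvarsCtx Γ ∧ varTy A ⊆ cvarsCtx Γ

theorem mem_cvarsCtx_iff : ∀ {Γ : CCtx}, z ∈ cvarsCtx Γ ↔ ∃ A, (z, A) ∈ Γ.decls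
  | .nil => by simp [cvarsCtx, CCtx.decls]
  | .cons Γ y C => by simp [cvarsCtx, CCtx.decls, mem_cvarsCtx_iff (Γ := Γ), exists_or]

theorem ne_of_notMem_cvarsCtx_of_mem_decls (hy : y ∉ cvarsCtx Γ) (hz : (z, A) ∈ Γ.decls) :
    y ≠ z := by
  rintro rfl
  exact hy (mem_cvarsCtx_iff.2 ⟨A, hz⟩)

theorem cvarsCtx_subset_of_decls_subset {Γ Δ : CCtx} (h : Γ.decls ⊆ Δ.decls) :
    cvarsCtx Γ ⊆ cvarsCtx Δ := fun _ hz ↦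
  let ⟨A, hA⟩ := mem_cvarsCtx_iff.1 hz
  mem_cvarsCtx_iff.2 ⟨A, h hA⟩

theorem mem_decls_of_cassoc_eq_some {Γ : CCtx} (h : cassoc Γ z = some A) : (z, A) ∈ Γ.decls := by
  match Γ with
  | .nil => simp [cassoc] at h
  | .cons Γ y C =>
    rw [cassoc] at h
    split_ifs at h with hy
    · cases h
      simp [CCtx.decls, hy]
    · exact List.mem_cons_of_mem _ (mem_decls_of_cassoc_eq_some h)

theorem CCtx.WellScoped.cassoc_eq_some {Γ : CCtx} (hΓ : Γ.WellScoped) (h : (z, A) ∈ Γ.decls) :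
    cassoc Γ z = some A := by
  match Γ with
  | .nil => simp [CCtx.decls] at h
  | .cons Γ y C =>
    obtain ⟨hΓ, hy, -⟩ := hΓ
    rcases List.mem_cons.1 h with h | h
    · cases h
      simp [cassoc]
    · rw [cassoc, if_neg (ne_of_notMem_cvarsCtx_of_mem_decls hy h), hΓ.cassoc_eq_some h]

theorem CCtx.WellScoped.varTy_subset {Γ : CCtx} (hΓ : Γ.WellScoped) (h : (z, A) ∈ Γ.decls) :
    varTy A ⊆ cvarsCtx Γ := by
  match Γ with
  | .nil => simp [CCtx.decls] at h
  | .cons Γ y C =>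
    obtain ⟨hΓ, -, hC⟩ := hΓ
    refine subset_trans ?_ (Finset.subset_insert y (cvarsCtx Γ))
    rcases List.mem_cons.1 h with h | h
    · cases h
      exact hC
    · exact hΓ.varTy_subset h

theorem decls_ctail (Γ : CCtx) : (ctail Γ).decls = Γ.decls.tail := by
  cases Γ <;> rfl

theorem decls_csrc_subset (i : ℤ) (Γ : CCtx) : (csrc i Γ).decls ⊆ Γ.decls := by
  match Γ with
  | .nil | .cons .nil _ _ => simp [csrc]
  | .cons (.cons Δ y A) f F =>
    have ih := decls_csrc_subset i Δ
    rw [csrc]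
    split_ifs
    · exact List.subset_cons_of_subset _ (List.subset_cons_of_subset _ ih)
    · exact List.cons_subset_cons _ (List.cons_subset_cons _ ih)

theorem decls_ctgt_subset (i : ℤ) (Γ : CCtx) : (ctgt i Γ).decls ⊆ Γ.decls := by
  match Γ with
  | .nil | .cons .nil _ _ => simp [ctgt]
  | .cons (.cons Δ y A) f F =>
    have ih := decls_ctgt_subset i Δ
    rw [ctgt]
    split_ifs
    · exact List.subset_cons_of_subset _ (List.subset_cons_of_subset _ ih)
    · refine List.subset_cons_of_subset _ (List.cons_subset_cons _ ?_)
      exact decls_ctail (ctgt i Δ) ▸ fun _ h ↦ ih (List.mem_of_mem_tail h)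
    · exact List.cons_subset_cons _ (List.cons_subset_cons _ ih)

theorem CPsAux.wellScoped_and_mem_and_varTy_subset (h : CPsAux Γ z A) :
    Γ.WellScoped ∧ z ∈ cvarsCtx Γ ∧ varTy A ⊆ cvarsCtx Γ := by
  induction h with
  | pss x => simp [CCtx.WellScoped, cvarsCtx, varTy]
  | @pse Γ x A y f _ hy hf hfy ih =>
    obtain ⟨hΓ, hx, hA⟩ := ih
    have hF : varTy (.arr A (.var x) (.var y)) ⊆ cvarsCtx (.cons Γ y A) := by
      simp only [varTy, varTm, cvarsCtx]
      grind
    refine ⟨⟨⟨hΓ, hy, hA⟩, ?_, hF⟩, Finset.mem_insert_self _ _,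
      hF.trans (Finset.subset_insert _ _)⟩
    simp [cvarsCtx, hfy, hf]
  | psd _ ih =>
    obtain ⟨hΓ, -, hF⟩ := ih
    simp only [varTy, varTm, Finset.union_subset_iff, Finset.singleton_subset_iff] at hF
    exact ⟨hΓ, hF.2, hF.1.1⟩

theorem CPs.wellScoped (h : CPs Γ) : Γ.WellScoped :=
  let ⟨h⟩ := h
  h.wellScoped_and_mem_and_varTy_subset.1

theorem CohJ.cps (h : CohJ Γ A) : CPs Γ :=
  let ⟨_, h, _, _, _, _, _⟩ := h
  h

theorem CohJ.varTy_subset (h : CohJ Γ A) : varTy A ⊆ cvarsCtx Γ := by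
  obtain ⟨i, -, -, -, -, hu, hv⟩ := h
  have hsrc := cvarsCtx_subset_of_decls_subset (decls_csrc_subset i Γ)
  have htgt := cvarsCtx_subset_of_decls_subset (decls_ctgt_subset i Γ)
  rw [← hu] at hsrc
  rw [← hv] at htgt
  rw [varTy]
  grind

end CaTTContexts

section CaTTSubstitution

variable {Γ Δ : CCtx} {A B : CTy} {t : CTm} {γ : CSub} {y z : ℕ}

mutual

theorem csubTm_nil : ∀ t : CTm, csubTm t .nil = t
  | .var _ => rfl
  | .coh Γ A δ => by rw [csubTm, ccomp_nil]

theorem ccomp_nil : ∀ δ : CSub, ccomp δ .nil = δ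
  | .nil => rfl
  | .cons δ x t => by rw [ccomp, ccomp_nil, csubTm_nil]

end

theorem csubTy_nil : ∀ A : CTy, csubTy A .nil = A
  | .obj => rfl
  | .arr A u v => by rw [csubTy, csubTy_nil, csubTm_nil, csubTm_nil]

theorem cdimN_csubTy (A : CTy) (γ : CSub) : cdimN (csubTy A γ) = cdimN A := by
  match A with
  | .obj => rfl
  | .arr A u v => rw [csubTy, cdimN, cdimN, cdimN_csubTy A γ]

mutual

theorem csubTm_cons_of_notMem (γ : CSub) (t : CTm) :
    ∀ u : CTm, y ∉ varTm u → csubTm u (.cons γ y t) = csubTm u γ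
  | .var x, h => if_neg (by simpa [varTm] using h)
  | .coh Γ A δ, h => by rw [csubTm, csubTm, ccomp_cons_of_notMem γ t δ h]

theorem ccomp_cons_of_notMem (γ : CSub) (t : CTm) :
    ∀ δ : CSub, y ∉ varSub δ → ccomp δ (.cons γ y t) = ccomp δ γ
  | .nil, _ => rfl
  | .cons δ x u, h => by
    rw [varSub, Finset.notMem_union] at h
    rw [ccomp, ccomp, ccomp_cons_of_notMem γ t δ h.1, csubTm_cons_of_notMem γ t u h.2]

end

theorem csubTy_cons_of_notMem (γ : CSub) (t : CTm) :
    ∀ A : CTy, y ∉ varTy A → csubTy A (.cons γ y t) = csubTy A γ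
  | .obj, _ => rfl
  | .arr A u v, h => by
    simp only [varTy, Finset.notMem_union] at h
    rw [csubTy, csubTy, csubTy_cons_of_notMem γ t A h.1.1, csubTm_cons_of_notMem γ t u h.1.2,
      csubTm_cons_of_notMem γ t v h.2]

/-- The domain of a substitution: the variables to which it assigns a term. On all others `clookup`
is the identity, which composition `ccomp` does not respect. -/
def csubDom : CSub → Finset ℕ
  | .nil => ∅
  | .cons γ y _ => insert y (csubDom γ)

theorem clookup_ccomp (δ : CSub) :
    ∀ γ : CSub, z ∈ csubDom γ → clookup (ccomp γ δ) z = csubTm (clookup γ z) δ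
  | .nil, h => by simp [csubDom] at h
  | .cons γ y t, h => by
    rw [ccomp, clookup, clookup]
    split_ifs with hy
    · rfl
    · exact clookup_ccomp δ γ (Finset.mem_of_mem_insert_of_ne h (Ne.symm hy))

mutual

theorem csubTm_csubTm (γ δ : CSub) :
    ∀ t : CTm, varTm t ⊆ csubDom γ → csubTm (csubTm t γ) δ = csubTm t (ccomp γ δ)
  | .var z, h => (clookup_ccomp δ γ (h (Finset.mem_singleton_self z))).symm
  | .coh Γ A θ, h => by rw [csubTm, csubTm, csubTm, ccomp_assoc γ δ θ h]

theorem ccomp_assoc (γ δ : CSub) :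
    ∀ θ : CSub, varSub θ ⊆ csubDom γ → ccomp (ccomp θ γ) δ = ccomp θ (ccomp γ δ)
  | .nil, _ => rfl
  | .cons θ x t, h => by
    rw [varSub, Finset.union_subset_iff] at h
    rw [ccomp, ccomp, ccomp, ccomp_assoc γ δ θ h.1, csubTm_csubTm γ δ t h.2]

end

theorem csubTy_csubTy (γ δ : CSub) :
    ∀ A : CTy, varTy A ⊆ csubDom γ → csubTy (csubTy A γ) δ = csubTy A (ccomp γ δ)
  | .obj, _ => rfl
  | .arr A u v, h => by
    simp only [varTy, Finset.union_subset_iff] at h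
    rw [csubTy, csubTy, csubTy, csubTy_csubTy γ δ A h.1.1, csubTm_csubTm γ δ u h.1.2,
      csubTm_csubTm γ δ v h.2]

theorem CSubJ.csubDom_eq : ∀ {γ : CSub} {Γ : CCtx}, CSubJ Δ γ Γ → csubDom γ = cvarsCtx Γ
  | _, _, .nil _ => rfl
  | _, _, .cons h _ _ => by rw [csubDom, cvarsCtx, h.csubDom_eq]

theorem CSubJ.left_valid : ∀ {γ : CSub} {Γ : CCtx}, CSubJ Δ γ Γ → CCtxJ Δ
  | _, _, .nil h => h
  | _, _, .cons h _ _ => h.left_valid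

theorem CSubJ.clookup_typed {γ : CSub} {Γ : CCtx} (h : CSubJ Δ γ Γ) (hΓ : Γ.WellScoped)
    (hz : (z, B) ∈ Γ.decls) : CTmJ Δ (clookup γ z) (csubTy B γ) := by
  match h with
  | .nil _ => simp [CCtx.decls] at hz
  | .cons (γ := γ) (Γ := Γ) (A := A) (x := y) (t := t) hγ _ ht =>
    obtain ⟨hΓ, hy, hA⟩ := hΓ
    rcases List.mem_cons.1 hz with hz | hz
    · cases hz
      rw [clookup, if_pos rfl, csubTy_cons_of_notMem γ t B fun h ↦ hy (hA h)]
      exact ht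
    · rw [clookup, if_neg (ne_of_notMem_cvarsCtx_of_mem_decls hy hz),
        csubTy_cons_of_notMem γ t B fun h ↦ hy (hΓ.varTy_subset hz h)]
      exact hγ.clookup_typed hΓ hz

mutual

theorem CTmJ.subst (hΔ : CCtxJ Δ)
    (hγ : ∀ z B, (z, B) ∈ Γ.decls → CTmJ Δ (clookup γ z) (csubTy B γ))
    {t : CTm} {A : CTy} (h : CTmJ Γ t A) : CTmJ Δ (csubTm t γ) (csubTy A γ) := by
  match h with
  | .var _ hz => exact hγ _ _ (mem_decls_of_cassoc_eq_some hz)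
  | .coh (A := A) (γ := δ) hA hδ =>
    rw [csubTm, csubTy_csubTy δ γ A (hδ.csubDom_eq ▸ hA.varTy_subset)]
    exact .coh hA (hδ.comp hΔ hγ hA.cps.wellScoped)

theorem CSubJ.comp (hΔ : CCtxJ Δ)
    (hγ : ∀ z B, (z, B) ∈ Γ.decls → CTmJ Δ (clookup γ z) (csubTy B γ))
    {δ : CSub} {Θ : CCtx} (h : CSubJ Γ δ Θ) (hΘ : Θ.WellScoped) : CSubJ Δ (ccomp δ γ) Θ := by
  match h with
  | .nil _ => exact .nil hΔ
  | .cons (A := A) (γ := δ) hδ hA ht =>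
    obtain ⟨hΘ, -, hAΘ⟩ := hΘ
    refine .cons (hδ.comp hΔ hγ hΘ) hA ?_
    rw [← csubTy_csubTy δ γ A (hδ.csubDom_eq ▸ hAΘ)]
    exact ht.subst hΔ hγ

end

theorem CTyJ.subst (hΔ : CCtxJ Δ)
    (hγ : ∀ z B, (z, B) ∈ Γ.decls → CTmJ Δ (clookup γ z) (csubTy B γ))
    (h : CTyJ Γ A) : CTyJ Δ (csubTy A γ) := by
  match h with
  | .obj _ => exact .obj hΔ
  | .arr hu hv => exact .arr (hu.subst hΔ hγ) (hv.subst hΔ hγ)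

theorem CTyJ.weaken (hΔ : CCtxJ Δ) (hΓΔ : ∀ z B, (z, B) ∈ Γ.decls → cassoc Δ z = some B)
    (h : CTyJ Γ A) : CTyJ Δ A := by
  have := h.subst (γ := .nil) hΔ fun z B hz ↦ by
    rw [csubTy_nil]
    exact .var hΔ (hΓΔ z B hz)
  rwa [csubTy_nil] at this

theorem CCtxJ.type_valid_of_mem {Γ : CCtx} (h : CCtxJ Γ) (hΓ : Γ.WellScoped)
    (hz : (z, A) ∈ Γ.decls) : CTyJ Γ A := by
  match h with
  | .nil => simp [CCtx.decls] at hz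
  | .cons hΓ' hC =>
    refine CTyJ.weaken (.cons hΓ' hC)
      (fun _ _ h ↦ hΓ.cassoc_eq_some (List.mem_cons_of_mem _ h)) ?_
    rcases List.mem_cons.1 hz with hz | hz
    · cases hz
      exact hC
    · exact hΓ'.type_valid_of_mem hΓ.1 hz

theorem CohJ.subst (hA : CohJ Γ A) (hγ : CSubJ Δ γ Γ) : CTyJ Δ (csubTy A γ) := by
  have hΔ := hγ.left_valid
  have typed {z B} := hγ.clookup_typed (z := z) (B := B) hA.cps.wellScoped
  obtain ⟨i, -, -, hu, hv, -, -⟩ := hA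
  exact .arr (hu.subst hΔ fun _ _ hz ↦ typed (decls_csrc_subset i Γ hz))
    (hv.subst hΔ fun _ _ hz ↦ typed (decls_ctgt_subset i Γ hz))

theorem CTmJ.type_valid (h : CTmJ Γ t A) (hΓ : Γ.WellScoped) : CTyJ Γ A := by
  match h with
  | .var hΓ' hz => exact hΓ'.type_valid_of_mem hΓ (mem_decls_of_cassoc_eq_some hz)
  | .coh hA hγ => exact hA.subst hγ

end CaTTSubstitution

section IteratedIdentity

variable {A A' : HTy} {u u' : HTm}

mutual

theorem idN_congr (hA : HTyEq A A') (hu : HTmEq u u') : ∀ n, HTyEq (idN n A u) (idN n A' u')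
  | 0 => hA
  | n + 1 => .idCong (idN_congr hA hu n) (reflN_congr hA hu n) (reflN_congr hA hu n)

theorem reflN_congr (hA : HTyEq A A') (hu : HTmEq u u') :
    ∀ n, HTmEq (reflN n A u) (reflN n A' u')
  | 0 => hu
  | n + 1 => .reflCong (idN_congr hA hu n) (reflN_congr hA hu n)

end

mutual

theorem hsubTy_idN (A : HTy) (u : HTm) (σ : HSubst) :
    ∀ n, hsubTy (idN n A u) σ = idN n (hsubTy A σ) (hsubTm u σ)
  | 0 => rfl
  | n + 1 => by rw [idN, hsubTy, hsubTy_idN, hsubTm_reflN, idN]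

theorem hsubTm_reflN (A : HTy) (u : HTm) (σ : HSubst) :
    ∀ n, hsubTm (reflN n A u) σ = reflN n (hsubTy A σ) (hsubTm u σ)
  | 0 => rfl
  | n + 1 => by rw [reflN, hsubTm, hsubTy_idN, hsubTm_reflN, reflN]

end

end IteratedIdentity

section Interpretation

variable {σ : HSubst} {u : HTm} {Γ : CCtx} {A : CTy} {x y : ℕ}

theorem hlookup_interpSub_Bv : ∀ γ : CSub, hlookup (interpSub γ) Bv = .var Bv
  | .nil => by simp [interpSub, hlookup]
  | .cons γ y t => by
    rw [interpSub, hlookup, if_neg (by simp [Bv]), hlookup_interpSub_Bv γ]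

/-- The HoTT substitution `σ` collapses the CaTT context `Γ` to the point `u` if it sends every
declared variable `z : A` to `refl^{dim A + 1}` at `u`, up to definitional equality. The base
type is whatever `σ` substitutes for `B`. -/
def CollapsesTo (σ : HSubst) (u : HTm) (Γ : CCtx) : Prop :=
  ∀ z A, (z, A) ∈ Γ.decls →
    HTmEq (hlookup σ (Sum.inl z)) (reflN (cdimN A) (.el (hlookup σ Bv)) u)

theorem CollapsesTo.of_cons (h : CollapsesTo σ u (.cons Γ y A)) : CollapsesTo σ u Γ :=
  fun z C hz ↦ h z C (List.mem_cons_of_mem _ hz)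

theorem CPsAux.hsubTm_elim_eq {C : CTy} (h : CPsAux Γ y C) (hσ : CollapsesTo σ u Γ)
    (A : CTy) (Γ₀ : CCtx) (τ : HSubst) :
    HTmEq (hsubTm (elim Γ A Γ₀ τ) σ) (reflN (cdimN A) (.el (hlookup σ Bv)) u) := by
  induction h generalizing τ with
  | pss w =>
    rw [elim, hsubTm_reflN]
    exact reflN_congr (.refl _) (hσ w .obj (List.mem_singleton_self _)) _
  | @pse Γ w C y f _ _ _ _ ih =>
    have hf : HTmEq (hlookup σ (Sum.inl f)) (reflN (cdimN C + 1) (.el (hlookup σ Bv)) u) :=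
      hσ f (.arr C (.var w) (.var y)) List.mem_cons_self
    rw [elim]
    exact ((HTmEq.appCong (.refl _) hf).trans (.jbeta ..)).trans (ih hσ.of_cons.of_cons _)
  | psd _ ih => exact ih hσ τ

mutual

theorem CTmJ.interpTm_eq_reflN {t : CTm} {A : CTy} (h : CTmJ (.cons .nil x .obj) t A) :
    HTmEq (interpTm t) (reflN (cdimN A) (.el (.var Bv)) (.var (Sum.inl x))) := by
  match t, h with
  | .var z, .var _ hz =>
    obtain ⟨rfl, rfl⟩ : z = x ∧ A = .obj := by
      simpa [CCtx.decls] using mem_decls_of_cassoc_eq_some hz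
    rw [interpTm]
    exact .refl _
  | .coh Γ A γ, .coh hA hγ =>
    obtain ⟨hΓ⟩ := hA.cps
    have hσ := hγ.collapsesTo hA.cps.wellScoped
    rw [interpTm, cdimN_csubTy, ← hlookup_interpSub_Bv γ]
    exact hΓ.hsubTm_elim_eq hσ A Γ _

theorem CSubJ.collapsesTo {γ : CSub} {Γ : CCtx} (h : CSubJ (.cons .nil x .obj) γ Γ)
    (hΓ : Γ.WellScoped) : CollapsesTo (interpSub γ) (.var (Sum.inl x)) Γ := by
  intro z B hz
  rw [hlookup_interpSub_Bv]
  match γ, h with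
  | .nil, .nil _ => simp [CCtx.decls] at hz
  | .cons γ y t, .cons hγ _ ht =>
    rw [interpSub, hlookup]
    rcases List.mem_cons.1 hz with hz | hz
    · cases hz
      rw [if_pos rfl, ← cdimN_csubTy _ γ]
      exact ht.interpTm_eq_reflN
    · have hyz : Sum.inl y ≠ (Sum.inl z : HVar) :=
        Sum.inl_injective.ne (ne_of_notMem_cvarsCtx_of_mem_decls hΓ.2.1 hz)
      rw [if_neg hyz, ← hlookup_interpSub_Bv γ]
      exact hγ.collapsesTo hΓ.1 z B hz

end

end Interpretation

/-- Lemma 5.2, type part. -/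
theorem stmt15 (x : ℕ) (A : CTy)
    (h : CTyJ (.cons .nil x .obj) A) :
    HTyEq (interpTy A) (idN (cdimN A) (.el (.var Bv)) (.var (Sum.inl x))) := by
  have hpoint : CCtx.WellScoped (.cons .nil x .obj) := by
    simp [CCtx.WellScoped, cvarsCtx, varTy]
  match A, h with
  | .obj, _ =>
    rw [interpTy]
    exact .refl _
  | .arr A u v, .arr hu hv =>
    rw [interpTy]
    exact .idCong (stmt15 x A (hu.type_valid hpoint)) hu.interpTm_eq_reflN hv.interpTm_eq_reflN
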